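/- Let p be an odd prime and let d, e, f be positive integers with 1 ≤ f < d < e, and let G = M₂(p,d,e,f). Consider the action of the automorphism group Aut(G) on the set of exact (p^d, p^e)-bicyclic pairs of G given by φ·(α, β) = (φ(α), φ(β)). Then the number of orbits of this action equals p^{2d−2f−1}(p−1). -/

import Mathlib

/-- Relators for the group `M₁(p,d,e,f) = ⟨a, b ∣ a^(p^e) = b^(p^d) = 1, b⁻¹ab = a^(1+p^f)⟩`,
where `a` is generator `0` and `b` is generator `1`. -/
def M1rels (p d e f : ℕ) : Set (FreeGroup (Fin 2)) :=
  {FreeGroup.of 0 ^ p ^ e, FreeGroup.of 1 ^ p ^ d,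
    (FreeGroup.of 1)⁻¹ * FreeGroup.of 0 * FreeGroup.of 1 * (FreeGroup.of 0 ^ (1 + p ^ f))⁻¹}

/-- The metacyclic group `M₁(p,d,e,f) = ⟨a, b ∣ a^(p^e) = b^(p^d) = 1, b⁻¹ab = a^(1+p^f)⟩`. -/
abbrev M1 (p d e f : ℕ) : Type := PresentedGroup (M1rels p d e f)

/-- The canonical generator `a` of `M₁(p,d,e,f)`. -/
def M1a (p d e f : ℕ) : M1 p d e f := PresentedGroup.of 0

/-- The canonical generator `b` of `M₁(p,d,e,f)`. -/
def M1b (p d e f : ℕ) : M1 p d e f := PresentedGroup.of 1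

/-- Relators for the group `M₂(p,d,e,f) = ⟨a, b ∣ a^(p^d) = b^(p^e) = 1, b⁻¹ab = a^(1+p^f)⟩`,
where `a` is generator `0` and `b` is generator `1`. -/
def M2rels (p d e f : ℕ) : Set (FreeGroup (Fin 2)) :=
  {FreeGroup.of 0 ^ p ^ d, FreeGroup.of 1 ^ p ^ e,
    (FreeGroup.of 1)⁻¹ * FreeGroup.of 0 * FreeGroup.of 1 * (FreeGroup.of 0 ^ (1 + p ^ f))⁻¹}

/-- The metacyclic group `M₂(p,d,e,f) = ⟨a, b ∣ a^(p^d) = b^(p^e) = 1, b⁻¹ab = a^(1+p^f)⟩`. -/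
abbrev M2 (p d e f : ℕ) : Type := PresentedGroup (M2rels p d e f)

/-- The canonical generator `a` of `M₂(p,d,e,f)`. -/
def M2a (p d e f : ℕ) : M2 p d e f := PresentedGroup.of 0

/-- The canonical generator `b` of `M₂(p,d,e,f)`. -/
def M2b (p d e f : ℕ) : M2 p d e f := PresentedGroup.of 1

/-- Relators for the group
`M₃(p,d,e,h,f) = ⟨a, b ∣ a^(p^h) = 1, b^(p^(d+e-h)) = a^(p^d), b⁻¹ab = a^(1+p^f)⟩`,
where `a` is generator `0` and `b` is generator `1`. -/
def M3rels (p d e h f : ℕ) : Set (FreeGroup (Fin 2)) :=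
  {FreeGroup.of 0 ^ p ^ h, FreeGroup.of 1 ^ p ^ (d + e - h) * (FreeGroup.of 0 ^ p ^ d)⁻¹,
    (FreeGroup.of 1)⁻¹ * FreeGroup.of 0 * FreeGroup.of 1 * (FreeGroup.of 0 ^ (1 + p ^ f))⁻¹}

/-- The non-split metacyclic group
`M₃(p,d,e,h,f) = ⟨a, b ∣ a^(p^h) = 1, b^(p^(d+e-h)) = a^(p^d), b⁻¹ab = a^(1+p^f)⟩`. -/
abbrev M3 (p d e h f : ℕ) : Type := PresentedGroup (M3rels p d e h f)

/-- The canonical generator `a` of `M₃(p,d,e,h,f)`. -/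
def M3a (p d e h f : ℕ) : M3 p d e h f := PresentedGroup.of 0

/-- The canonical generator `b` of `M₃(p,d,e,h,f)`. -/
def M3b (p d e h f : ℕ) : M3 p d e h f := PresentedGroup.of 1

/-- `(α, β)` is an exact `(m,n)`-bicyclic pair of `G`: `α` has order `m`, `β` has order `n`,
`⟨α⟩ ∩ ⟨β⟩ = 1`, and `G = ⟨α⟩⟨β⟩`. -/
def IsExactBicyclicPair {G : Type*} [Group G] (m n : ℕ) (α β : G) : Prop :=
  orderOf α = m ∧ orderOf β = n ∧
    Subgroup.zpowers α ⊓ Subgroup.zpowers β = ⊥ ∧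
    ∀ g : G, ∃ i j : ℤ, g = α ^ i * β ^ j

/-- The equivalence on exact `(m,n)`-bicyclic pairs of `G` induced by the componentwise
action of `Aut(G)`: two pairs are equivalent iff some automorphism maps one to the other.
The orbits of the action are exactly the equivalence classes. -/
def bicyclicPairSetoid (G : Type*) [Group G] (m n : ℕ) :
    Setoid {x : G × G // IsExactBicyclicPair m n x.1 x.2} where
  r x y := ∃ φ : MulAut G, φ x.1.1 = y.1.1 ∧ φ x.1.2 = y.1.2
  iseqv := by
    refine ⟨fun x => ⟨MulEquiv.refl G, rfl, rfl⟩, ?_, ?_⟩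
    · rintro x y ⟨φ, h1, h2⟩
      exact ⟨φ.symm, by rw [← h1]; exact φ.symm_apply_apply _,
        by rw [← h2]; exact φ.symm_apply_apply _⟩
    · rintro x y z ⟨φ, h1, h2⟩ ⟨ψ, h3, h4⟩
      exact ⟨φ.trans ψ, by simp [MulEquiv.trans_apply, h1, h3],
        by simp [MulEquiv.trans_apply, h2, h4]⟩

/-- Reduction of residues modulo `p ^ m` to residues modulo `p ^ n`. -/
def ZMod.primePowRed (p : ℕ) {n m : ℕ} (h : n ≤ m) : ZMod (p ^ m) →+* ZMod (p ^ n) :=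
  ZMod.castHom (pow_dvd_pow p h) _

open ZMod (primePowRed)

theorem ZMod.isUnit_primePowRed_iff {p n m : ℕ} [Fact p.Prime] (hn : 0 < n) (h : n ≤ m)
    (x : ZMod (p ^ m)) : IsUnit (primePowRed p h x) ↔ IsUnit x := by
  obtain ⟨k, rfl⟩ := ZMod.natCast_zmod_surjective x
  rw [map_natCast, ZMod.isUnit_iff_coprime, ZMod.isUnit_iff_coprime,
    Nat.coprime_pow_right_iff hn, Nat.coprime_pow_right_iff (hn.trans_le h)]

theorem ZMod.primePowRed_eq_zero_iff {p c m : ℕ} [Fact p.Prime] (h : c ≤ m)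
    (x : ZMod (p ^ m)) :
    primePowRed p (Nat.sub_le m c) x = 0 ↔ ((p ^ c : ℕ) : ZMod (p ^ m)) * x = 0 := by
  obtain ⟨k, rfl⟩ := ZMod.natCast_zmod_surjective x
  have hp := (Fact.out : p.Prime).pos
  rw [map_natCast, ← Nat.cast_mul, ZMod.natCast_eq_zero_iff, ZMod.natCast_eq_zero_iff]
  conv_rhs => rw [← Nat.add_sub_cancel' h, pow_add]
  exact (Nat.mul_dvd_mul_iff_left (pow_pos hp c)).symm

theorem ZMod.ncard_primePowRed_fiber {p n m : ℕ} [Fact p.Prime] (h : n ≤ m) (t : ZMod (p ^ n)) :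
    {x : ZMod (p ^ m) | primePowRed p h x = t}.ncard = p ^ (m - n) := by
  have hp := (Fact.out : p.Prime).pos
  have hs : Function.Surjective (primePowRed p h) := ZMod.castHom_surjective _
  let F : ZMod (p ^ m) →+ ZMod (p ^ n) := (primePowRed p h).toAddMonoidHom
  have hF : Function.Surjective F := hs
  obtain ⟨x₀, hx₀⟩ := hs t
  have himg : {x : ZMod (p ^ m) | primePowRed p h x = t} =
      (fun x => x₀ + x) '' (F.ker : Set (ZMod (p ^ m))) := by
    ext x
    constructor
    · intro hx
      refine ⟨x - x₀, ?_, by simp⟩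
      change primePowRed p h (x - x₀) = 0
      rw [map_sub, hx₀, show primePowRed p h x = t from hx, sub_self]
    · rintro ⟨y, hy, rfl⟩
      have hy' : primePowRed p h y = 0 := hy
      simp [hx₀, hy']
  rw [himg, Set.ncard_image_of_injective _ (add_right_injective x₀)]
  have hcard := F.ker.card_mul_index
  rw [AddSubgroup.index_ker, AddMonoidHom.range_eq_top.2 hF, Nat.card_zmod,
    AddSubgroup.card_top, Nat.card_zmod] at hcard
  have : p ^ (m - n) * p ^ n = p ^ m := by rw [← pow_add, Nat.sub_add_cancel h]
  exact Nat.eq_of_mul_eq_mul_right (pow_pos hp n) (hcard.trans this.symm)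

theorem ZMod.ncard_isUnit (n : ℕ) [NeZero n] : {x : ZMod n | IsUnit x}.ncard = n.totient := by
  rw [← ZMod.card_units_eq_totient, ← Nat.card_eq_fintype_card,
    ← Nat.card_range_of_injective (Units.val_injective (α := ZMod n))]
  rfl

/-- The valuation of a geometric sum `1 + z + ⋯ + z ^ (n - 1)` with `z ≡ 1` modulo the odd
prime `p` is that of `n`. -/
theorem Int.prime_pow_dvd_geom_sum_iff {p : ℕ} (hp : p.Prime) (hodd : Odd p) {z : ℤ}
    (hz : (p : ℤ) ∣ z - 1) (c n : ℕ) :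
    (p : ℤ) ^ c ∣ ∑ i ∈ Finset.range n, z ^ i ↔ p ^ c ∣ n := by
  have hp' : Prime (p : ℤ) := Nat.prime_iff_prime_int.1 hp
  rcases eq_or_ne z 1 with rfl | hz1
  · simp only [one_pow, Finset.sum_const, Finset.card_range, nsmul_eq_mul, mul_one]
    exact_mod_cast Iff.rfl
  have hpz : ¬(p : ℤ) ∣ z := fun h =>
    hp'.not_isUnit (isUnit_of_dvd_one (by simpa using dvd_sub h hz))
  have hlte := Int.emultiplicity_pow_sub_pow hp hodd hz hpz n
  rw [one_pow, ← geom_sum_mul, emultiplicity_mul hp', add_comm] at hlte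
  have hfin : FiniteMultiplicity (p : ℤ) (z - 1) :=
    Int.finiteMultiplicity_iff.2 ⟨by simpa using hp.ne_one, sub_ne_zero.2 hz1⟩
  replace hlte := ENat.add_right_injective_of_ne_top
    (finiteMultiplicity_iff_emultiplicity_ne_top.1 hfin) hlte
  rw [pow_dvd_iff_le_emultiplicity, hlte, ← pow_dvd_iff_le_emultiplicity]

theorem ZMod.primePowRed_geom_sum_eq_zero_iff {p m c : ℕ} [Fact p.Prime] (hodd : Odd p)
    (hm : 1 ≤ m) (hc : c ≤ m) {r : ZMod (p ^ m)} (hr : primePowRed p hm r = 1) (n : ℕ) :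
    primePowRed p hc (∑ i ∈ Finset.range n, r ^ i) = 0 ↔ p ^ c ∣ n := by
  obtain ⟨z, rfl⟩ := ZMod.intCast_surjective r
  have hz : (p : ℤ) ∣ z - 1 := by
    rw [map_intCast, ← sub_eq_zero, ← Int.cast_one, ← Int.cast_sub,
      ZMod.intCast_zmod_eq_zero_iff_dvd, pow_one] at hr
    exact hr
  rw [← Int.prime_pow_dvd_geom_sum_iff Fact.out hodd hz]
  have : (∑ i ∈ Finset.range n, (z : ZMod (p ^ m)) ^ i) =
      ((∑ i ∈ Finset.range n, z ^ i : ℤ) : ZMod (p ^ m)) := by push_cast; rfl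
  rw [this, map_intCast, ZMod.intCast_zmod_eq_zero_iff_dvd]
  push_cast
  rfl

/-- The group `ZMod n ⋉ ZMod m`, where `y : ZMod n` acts on `ZMod m` from the right by
multiplication by `ψ y`; the element `(x, y)` stands for `b ^ y * a ^ x`. -/
@[ext] structure ZModSemidirect {m n : ℕ} (ψ : Multiplicative (ZMod n) →* ZMod m) where
  fst : ZMod m
  snd : ZMod n

namespace ZModSemidirect

open Multiplicative (ofAdd)

variable {m n : ℕ} {ψ : Multiplicative (ZMod n) →* ZMod m}

instance : Mul (ZModSemidirect ψ) :=
  ⟨fun x y => ⟨x.fst * ψ (ofAdd y.snd) + y.fst, x.snd + y.snd⟩⟩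

instance : One (ZModSemidirect ψ) := ⟨⟨0, 0⟩⟩

instance : Inv (ZModSemidirect ψ) := ⟨fun x => ⟨-(x.fst * ψ (ofAdd (-x.snd))), -x.snd⟩⟩

@[simp] theorem mul_fst (x y : ZModSemidirect ψ) :
    (x * y).fst = x.fst * ψ (ofAdd y.snd) + y.fst := rfl

@[simp] theorem mul_snd (x y : ZModSemidirect ψ) : (x * y).snd = x.snd + y.snd := rfl

@[simp] theorem one_fst : (1 : ZModSemidirect ψ).fst = 0 := rfl

@[simp] theorem one_snd : (1 : ZModSemidirect ψ).snd = 0 := rfl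

@[simp] theorem inv_fst (x : ZModSemidirect ψ) :
    x⁻¹.fst = -(x.fst * ψ (ofAdd (-x.snd))) := rfl

@[simp] theorem inv_snd (x : ZModSemidirect ψ) : x⁻¹.snd = -x.snd := rfl

instance : Group (ZModSemidirect ψ) :=
  Group.ofLeftAxioms
    (fun x y z => by
      ext
      · simp only [mul_fst, mul_snd, ofAdd_add, map_mul]; ring
      · simp [add_assoc])
    (fun x => by ext <;> simp)
    (fun x => by
      ext
      · simp only [mul_fst, inv_fst, one_fst, neg_mul, mul_assoc, ← map_mul, ← ofAdd_add,
          neg_add_cancel, ofAdd_zero, map_one, mul_one]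
      · simp)

/-- The underlying pair of residues. -/
def equivProd : ZModSemidirect ψ ≃ ZMod m × ZMod n where
  toFun x := (x.fst, x.snd)
  invFun x := ⟨x.1, x.2⟩
  left_inv _ := rfl
  right_inv _ := rfl

instance [NeZero m] [NeZero n] : Finite (ZModSemidirect ψ) := Finite.of_equiv _ equivProd.symm

theorem natCard : Nat.card (ZModSemidirect ψ) = m * n := by
  rw [Nat.card_congr equivProd, Nat.card_prod, Nat.card_zmod, Nat.card_zmod]

theorem pow_snd (x : ZModSemidirect ψ) (k : ℕ) : (x ^ k).snd = k * x.snd := by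
  induction k with
  | zero => simp
  | succ k ih => rw [pow_succ, mul_snd, ih]; push_cast; ring

theorem pow_fst (x : ZModSemidirect ψ) (k : ℕ) :
    (x ^ k).fst = x.fst * ∑ i ∈ Finset.range k, ψ (ofAdd x.snd) ^ i := by
  induction k with
  | zero => simp
  | succ k ih => rw [pow_succ, mul_fst, ih, geom_sum_succ]; ring

end ZModSemidirect

theorem ZMod.primePowRed_primePowRed {p k n m : ℕ} (h : k ≤ n) (h' : n ≤ m) (x : ZMod (p ^ m)) :
    primePowRed p h (primePowRed p h' x) = primePowRed p (h.trans h') x :=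
  RingHom.congr_fun (RingHom.ext_zmod ((primePowRed p h).comp (primePowRed p h')) _) x

theorem ZMod.primePowRed_self {p m : ℕ} (x : ZMod (p ^ m)) : primePowRed p le_rfl x = x :=
  RingHom.congr_fun (RingHom.ext_zmod (primePowRed p le_rfl) (RingHom.id _)) x

namespace ZModSemidirect

open Multiplicative (ofAdd)

variable {p d e : ℕ} {ψ : Multiplicative (ZMod (p ^ e)) →* ZMod (p ^ d)}

/-- The second coordinate modulo `p`. -/
def redSnd (ψ : Multiplicative (ZMod (p ^ e)) →* ZMod (p ^ d)) (he : 1 ≤ e) :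
    ZModSemidirect ψ →* Multiplicative (ZMod (p ^ 1)) where
  toFun x := ofAdd (primePowRed p he x.snd)
  map_one' := by simp
  map_mul' x y := by simp

/-- The first coordinate modulo `p`, a homomorphism if the action is trivial modulo `p`. -/
def redFst (hd : 1 ≤ d) (hψ : ∀ y, primePowRed p hd (ψ y) = 1) :
    ZModSemidirect ψ →* Multiplicative (ZMod (p ^ 1)) where
  toFun x := ofAdd (primePowRed p hd x.fst)
  map_one' := by simp
  map_mul' x y := by simp [hψ]

theorem primePowRed_pow_snd_eq_zero_iff {x : ZModSemidirect ψ} (hx : IsUnit x.snd)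
    {c : ℕ} (hc : c ≤ e) (n : ℕ) : primePowRed p hc (x ^ n).snd = 0 ↔ p ^ c ∣ n := by
  rw [pow_snd, map_mul, (hx.map (primePowRed p hc)).mul_left_eq_zero, map_natCast,
    ZMod.natCast_eq_zero_iff]

variable [Fact p.Prime]

theorem conditions_of_isExactBicyclicPair (hd : 1 ≤ d) (hde : d < e)
    (hψ : ∀ y, primePowRed p hd (ψ y) = 1) {α β : ZModSemidirect ψ}
    (h : IsExactBicyclicPair (p ^ d) (p ^ e) α β) :
    primePowRed p (Nat.sub_le e d) α.snd = 0 ∧ IsUnit α.fst ∧ IsUnit β.snd := by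
  obtain ⟨hα, -, -, hgen⟩ := h
  have he : 1 ≤ e := hd.trans hde.le
  have hα0 : primePowRed p (Nat.sub_le e d) α.snd = 0 := by
    rw [ZMod.primePowRed_eq_zero_iff hde.le, ← pow_snd, orderOf_dvd_iff_pow_eq_one.1 hα.dvd,
      one_snd]
  have hα1 : primePowRed p he α.snd = 0 := by
    rw [← ZMod.primePowRed_primePowRed (Nat.sub_pos_of_lt hde) (Nat.sub_le e d), hα0, map_zero]
  have hsnd (g : ZModSemidirect ψ) (i j : ℤ) (hg : g = α ^ i * β ^ j) :
      primePowRed p he g.snd = j * primePowRed p he β.snd := by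
    have := congrArg (redSnd ψ he) hg
    rw [map_mul, map_zpow, map_zpow] at this
    replace this := congrArg Multiplicative.toAdd this
    rw [toAdd_mul, toAdd_zpow, toAdd_zpow] at this
    simpa [redSnd, hα1] using this
  have hfst (g : ZModSemidirect ψ) (i j : ℤ) (hg : g = α ^ i * β ^ j) :
      primePowRed p hd g.fst = i * primePowRed p hd α.fst + j * primePowRed p hd β.fst := by
    have := congrArg (redFst hd hψ) hg
    rw [map_mul, map_zpow, map_zpow] at this
    replace this := congrArg Multiplicative.toAdd this
    rw [toAdd_mul, toAdd_zpow, toAdd_zpow] at this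
    simpa [redFst] using this
  have hβ : IsUnit (primePowRed p he β.snd) := by
    obtain ⟨i, j, hij⟩ := hgen ⟨0, 1⟩
    have := hsnd _ i j hij
    rw [map_one] at this
    exact .of_mul_eq_one _ (by rw [mul_comm]; exact this.symm)
  refine ⟨hα0, ?_, (ZMod.isUnit_primePowRed_iff one_pos he _).1 hβ⟩
  obtain ⟨i, j, hij⟩ := hgen ⟨1, 0⟩
  have h2 := hsnd _ i j hij
  rw [map_zero, eq_comm, hβ.mul_left_eq_zero] at h2
  have h1 := hfst _ i j hij
  rw [map_one, h2, zero_mul, add_zero] at h1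
  exact (ZMod.isUnit_primePowRed_iff one_pos hd _).1
    (.of_mul_eq_one _ (by rw [mul_comm]; exact h1.symm))

theorem primePowRed_pow_fst_eq_zero_iff (hodd : Odd p) (hd : 1 ≤ d)
    (hψ : ∀ y, primePowRed p hd (ψ y) = 1) {x : ZModSemidirect ψ} (hx : IsUnit x.fst)
    {c : ℕ} (hc : c ≤ d) (n : ℕ) : primePowRed p hc (x ^ n).fst = 0 ↔ p ^ c ∣ n := by
  rw [pow_fst, map_mul, (hx.map (primePowRed p hc)).mul_right_eq_zero,
    ZMod.primePowRed_geom_sum_eq_zero_iff hodd hd hc (hψ _)]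

theorem primePowRed_pow_fst_eq_zero (hodd : Odd p) (hd : 1 ≤ d)
    (hψ : ∀ y, primePowRed p hd (ψ y) = 1) (x : ZModSemidirect ψ)
    {c : ℕ} (hc : c ≤ d) {n : ℕ} (hn : p ^ c ∣ n) : primePowRed p hc (x ^ n).fst = 0 := by
  rw [pow_fst, map_mul, (ZMod.primePowRed_geom_sum_eq_zero_iff hodd hd hc (hψ _) n).2 hn, mul_zero]

theorem orderOf_of_isUnit_fst (hodd : Odd p) (hd : 1 ≤ d) (hde : d < e)
    (hψ : ∀ y, primePowRed p hd (ψ y) = 1) {x : ZModSemidirect ψ} (hx : IsUnit x.fst)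
    (hx0 : primePowRed p (Nat.sub_le e d) x.snd = 0) : orderOf x = p ^ d := by
  refine Nat.dvd_antisymm (orderOf_dvd_of_pow_eq_one ?_) ?_
  · ext
    · rw [← ZMod.primePowRed_self (x ^ _).fst]
      exact primePowRed_pow_fst_eq_zero hodd hd hψ _ _ dvd_rfl
    · rw [pow_snd]
      exact (ZMod.primePowRed_eq_zero_iff hde.le _).1 hx0
  · rw [← primePowRed_pow_fst_eq_zero_iff hodd hd hψ hx le_rfl, pow_orderOf_eq_one, one_fst,
      map_zero]

theorem orderOf_of_isUnit_snd (hodd : Odd p) (hd : 1 ≤ d) (hde : d < e)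
    (hψ : ∀ y, primePowRed p hd (ψ y) = 1) {x : ZModSemidirect ψ} (hx : IsUnit x.snd) :
    orderOf x = p ^ e := by
  refine Nat.dvd_antisymm (orderOf_dvd_of_pow_eq_one ?_) ?_
  · ext
    · rw [← ZMod.primePowRed_self (x ^ _).fst]
      exact primePowRed_pow_fst_eq_zero hodd hd hψ _ _ (pow_dvd_pow p hde.le)
    · rw [pow_snd, ZMod.natCast_self, zero_mul, one_snd]
  · rw [← primePowRed_pow_snd_eq_zero_iff hx le_rfl, pow_orderOf_eq_one, one_snd, map_zero]

theorem isExactBicyclicPair_of_conditions (hodd : Odd p) (hd : 1 ≤ d) (hde : d < e)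
    (hψ : ∀ y, primePowRed p hd (ψ y) = 1) {α β : ZModSemidirect ψ}
    (hα0 : primePowRed p (Nat.sub_le e d) α.snd = 0) (hα : IsUnit α.fst) (hβ : IsUnit β.snd) :
    IsExactBicyclicPair (p ^ d) (p ^ e) α β := by
  have oα := orderOf_of_isUnit_fst hodd hd hde hψ hα hα0
  have oβ := orderOf_of_isUnit_snd hodd hd hde hψ hβ
  have hdisj : Disjoint (Subgroup.zpowers α) (Subgroup.zpowers β) := by
    rw [Subgroup.disjoint_def]
    intro x hxα hxβ
    obtain ⟨s, rfl⟩ := (mem_powers_iff_mem_zpowers).2 hxα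
    obtain ⟨t, ht⟩ := (mem_powers_iff_mem_zpowers).2 hxβ
    change β ^ t = α ^ s at ht
    change α ^ s = 1
    have key : ∀ c ≤ d, p ^ c ∣ s := by
      intro c
      induction c with
      | zero => simp
      | succ c ih =>
        intro hc
        obtain ⟨s', hs'⟩ := ih (Nat.le_of_succ_le hc)
        have ht' : p ^ (c + 1) ∣ t := by
          rw [← primePowRed_pow_snd_eq_zero_iff hβ (hc.trans hde.le), ht, pow_snd]
          obtain ⟨j, hj⟩ := ZMod.natCast_zmod_surjective α.snd
          rw [← hj, map_natCast, ZMod.natCast_eq_zero_iff] at hα0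
          have hpj : p ∣ j := (dvd_pow_self p (Nat.sub_ne_zero_of_lt hde)).trans hα0
          rw [← hj, ← Nat.cast_mul, map_natCast, ZMod.natCast_eq_zero_iff, hs', pow_succ]
          exact mul_dvd_mul (Dvd.intro _ rfl) hpj
        rw [← primePowRed_pow_fst_eq_zero_iff hodd hd hψ hα hc, ← ht]
        exact primePowRed_pow_fst_eq_zero hodd hd hψ _ _ ht'
    exact orderOf_dvd_iff_pow_eq_one.1 (oα.dvd.trans (key d le_rfl))
  refine ⟨oα, oβ, disjoint_iff.1 hdisj, fun g => ?_⟩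
  have hcompl : Subgroup.IsComplement' (Subgroup.zpowers α) (Subgroup.zpowers β) :=
    Subgroup.isComplement'_of_card_mul_and_disjoint
      (by rw [Nat.card_zpowers, Nat.card_zpowers, oα, oβ, natCard]) hdisj
  obtain ⟨⟨⟨_, i, rfl⟩, ⟨_, j, rfl⟩⟩, hij⟩ := hcompl.2 g
  exact ⟨i, j, hij.symm⟩

theorem isExactBicyclicPair_iff (hodd : Odd p) (hd : 1 ≤ d) (hde : d < e)
    (hψ : ∀ y, primePowRed p hd (ψ y) = 1) (α β : ZModSemidirect ψ) :
    IsExactBicyclicPair (p ^ d) (p ^ e) α β ↔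
      primePowRed p (Nat.sub_le e d) α.snd = 0 ∧ IsUnit α.fst ∧ IsUnit β.snd :=
  ⟨conditions_of_isExactBicyclicPair hd hde hψ,
    fun h => isExactBicyclicPair_of_conditions hodd hd hde hψ h.1 h.2.1 h.2.2⟩

end ZModSemidirect

theorem ZMod.orderOf_one_add_prime_pow {p d f : ℕ} (hp : p.Prime) (hodd : Odd p) (hf : 0 < f)
    (hfd : f ≤ d) : orderOf (1 + (p : ZMod (p ^ d)) ^ f) = p ^ (d - f) := by
  obtain ⟨n, rfl⟩ := Nat.exists_eq_add_of_le' hfd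
  have h3 : 3 ≤ p := by
    have := hp.two_le
    obtain ⟨k, rfl⟩ := hodd
    lia
  have h := ZMod.orderOf_one_add_mul_prime_pow hp f hf.ne' (by nlinarith) 1
    (fun h => hp.one_lt.ne' (by simpa using Int.eq_one_of_dvd_one (by simp) h)) n
  rw [Int.cast_one, mul_one] at h
  rw [h, Nat.add_sub_cancel]

namespace ZModSemidirect

open Multiplicative (ofAdd)

variable {p d e f : ℕ} {ψ : Multiplicative (ZMod (p ^ e)) →* ZMod (p ^ d)}

theorem action_natCast (k : ℕ) : ψ (ofAdd (k : ZMod (p ^ e))) = ψ (ofAdd 1) ^ k := by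
  rw [← map_pow, ← ofAdd_nsmul, nsmul_one]

variable [Fact p.Prime]

theorem exists_action (hodd : Odd p) (hf : 0 < f) (hfd : f ≤ d) (hde : d ≤ e) :
    ∃ ψ : Multiplicative (ZMod (p ^ e)) →* ZMod (p ^ d),
      ψ (ofAdd 1) = 1 + (p : ZMod (p ^ d)) ^ f := by
  have hu : (1 + (p : ZMod (p ^ d)) ^ f) ^ p ^ e = 1 := by
    rw [← orderOf_dvd_iff_pow_eq_one, ZMod.orderOf_one_add_prime_pow Fact.out hodd hf hfd]
    exact pow_dvd_pow p ((Nat.sub_le d f).trans hde)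
  refine ⟨⟨⟨fun y => (1 + (p : ZMod (p ^ d)) ^ f) ^ y.toAdd.val, by simp⟩, fun x y => ?_⟩, ?_⟩
  · change _ ^ (x.toAdd + y.toAdd).val = _ ^ x.toAdd.val * _ ^ y.toAdd.val
    rw [ZMod.val_add, ← pow_add]
    exact (pow_eq_pow_mod _ hu).symm
  · have : Fact (1 < p ^ e) :=
      ⟨Nat.one_lt_pow ((hf.trans_le hfd).trans_le hde).ne' (Fact.out : p.Prime).one_lt⟩
    change (1 + (p : ZMod (p ^ d)) ^ f) ^ (1 : ZMod (p ^ e)).val = _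
    rw [ZMod.val_one, pow_one]

theorem action_mod_prime (hψ : ψ (ofAdd 1) = 1 + (p : ZMod (p ^ d)) ^ f) (hd : 1 ≤ d)
    (hf : 0 < f) (y : Multiplicative (ZMod (p ^ e))) : primePowRed p hd (ψ y) = 1 := by
  obtain ⟨k, hk⟩ := ZMod.natCast_zmod_surjective y.toAdd
  have hp : ((p : ℕ) : ZMod (p ^ 1)) = 0 := by rw [ZMod.natCast_eq_zero_iff, pow_one]
  rw [← ofAdd_toAdd y, ← hk, action_natCast, hψ]
  simp [hp, hf.ne']

theorem action_eq_one_iff (hψ : ψ (ofAdd 1) = 1 + (p : ZMod (p ^ d)) ^ f) (hodd : Odd p)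
    (hf : 0 < f) (hfd : f ≤ d) (h : d - f ≤ e) (y : ZMod (p ^ e)) :
    ψ (ofAdd y) = 1 ↔ primePowRed p h y = 0 := by
  obtain ⟨k, rfl⟩ := ZMod.natCast_zmod_surjective y
  rw [action_natCast, hψ, ← orderOf_dvd_iff_pow_eq_one,
    ZMod.orderOf_one_add_prime_pow Fact.out hodd hf hfd, map_natCast, ZMod.natCast_eq_zero_iff]

theorem action_eq_iff (hψ : ψ (ofAdd 1) = 1 + (p : ZMod (p ^ d)) ^ f) (hodd : Odd p)
    (hf : 0 < f) (hfd : f ≤ d) (h : d - f ≤ e) (y : ZMod (p ^ e)) :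
    ψ (ofAdd y) = 1 + (p : ZMod (p ^ d)) ^ f ↔ primePowRed p h y = 1 := by
  have hu : IsUnit (ψ (ofAdd 1)) := (Group.isUnit (ofAdd (1 : ZMod (p ^ e)))).map ψ
  have hy : ψ (ofAdd y) = ψ (ofAdd (y - 1)) * ψ (ofAdd 1) := by
    rw [← map_mul, ← ofAdd_add, sub_add_cancel]
  rw [← hψ, hy, hu.mul_eq_right, action_eq_one_iff hψ hodd hf hfd h, map_sub, map_one, sub_eq_zero]

theorem conj_eq_pow_iff (hψ : ψ (ofAdd 1) = 1 + (p : ZMod (p ^ d)) ^ f) (hodd : Odd p)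
    (hf : 0 < f) (hfd : f ≤ d) (hde : d ≤ e) {α : ZModSemidirect ψ} (hα : IsUnit α.fst)
    (β : ZModSemidirect ψ) :
    β⁻¹ * α * β = α ^ (1 + p ^ f) ↔ primePowRed p (Nat.sub_le e f) α.snd = 0 ∧
      primePowRed p ((Nat.sub_le d f).trans hde) β.snd = 1 := by
  have hsnd : (α * β).snd = (β * α ^ (1 + p ^ f)).snd ↔
      primePowRed p (Nat.sub_le e f) α.snd = 0 := by
    rw [ZMod.primePowRed_eq_zero_iff (hfd.trans hde), mul_snd, mul_snd, pow_snd, add_comm,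
      Nat.cast_add, Nat.cast_one, add_mul, one_mul, add_right_inj, left_eq_add]
  rw [mul_assoc, inv_mul_eq_iff_eq_mul, ZModSemidirect.ext_iff, and_comm, hsnd]
  refine and_congr_right fun h0 => ?_
  have h1 : ψ (ofAdd α.snd) = 1 := by
    rw [action_eq_one_iff hψ hodd hf hfd ((Nat.sub_le d f).trans hde),
      ← ZMod.primePowRed_primePowRed (Nat.sub_le_sub_right hde f) (Nat.sub_le e f), h0, map_zero]
  have h2 : (α ^ (1 + p ^ f)).snd = α.snd := by
    rw [pow_snd, Nat.cast_add, Nat.cast_one, add_mul, one_mul,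
      (ZMod.primePowRed_eq_zero_iff (hfd.trans hde) _).1 h0, add_zero]
  rw [mul_fst, mul_fst, h2, h1, mul_one, add_comm, add_right_inj, pow_fst, h1, hα.mul_right_inj,
    ← action_eq_iff hψ hodd hf hfd]
  simp

theorem ncard_exact_coordinates (hde : d ≤ e) (hd : 0 < d) :
    {q : (ZMod (p ^ d) × ZMod (p ^ e)) × (ZMod (p ^ d) × ZMod (p ^ e)) |
      primePowRed p (Nat.sub_le e d) q.1.2 = 0 ∧ IsUnit q.1.1 ∧ IsUnit q.2.2}.ncard =
    (p ^ (d - 1) * (p - 1) * p ^ d) * (p ^ d * (p ^ (e - 1) * (p - 1))) := by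
  have : {q : (ZMod (p ^ d) × ZMod (p ^ e)) × (ZMod (p ^ d) × ZMod (p ^ e)) |
      primePowRed p (Nat.sub_le e d) q.1.2 = 0 ∧ IsUnit q.1.1 ∧ IsUnit q.2.2} =
      ({x | IsUnit x} ×ˢ {x | primePowRed p (Nat.sub_le e d) x = 0}) ×ˢ
        (Set.univ ×ˢ {x | IsUnit x}) := by
    ext q
    simp only [Set.mem_ofPred_eq, Set.mem_prod, Set.mem_univ, true_and]
    tauto
  rw [this, Set.ncard_prod, Set.ncard_prod, Set.ncard_prod, ZMod.ncard_primePowRed_fiber,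
    ZMod.ncard_isUnit, ZMod.ncard_isUnit, Set.ncard_univ, Nat.card_zmod, Nat.sub_sub_self hde,
    Nat.totient_prime_pow Fact.out hd, Nat.totient_prime_pow Fact.out (hd.trans_le hde)]

theorem ncard_automorphism_coordinates (hfd : f ≤ d) (hde : d ≤ e) (hd : 0 < d) :
    {q : (ZMod (p ^ d) × ZMod (p ^ e)) × (ZMod (p ^ d) × ZMod (p ^ e)) |
      IsUnit q.1.1 ∧ primePowRed p (Nat.sub_le e f) q.1.2 = 0 ∧
        primePowRed p ((Nat.sub_le d f).trans hde) q.2.2 = 1}.ncard =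
    (p ^ (d - 1) * (p - 1) * p ^ f) * (p ^ d * p ^ (e - (d - f))) := by
  have : {q : (ZMod (p ^ d) × ZMod (p ^ e)) × (ZMod (p ^ d) × ZMod (p ^ e)) |
      IsUnit q.1.1 ∧ primePowRed p (Nat.sub_le e f) q.1.2 = 0 ∧
        primePowRed p ((Nat.sub_le d f).trans hde) q.2.2 = 1} =
      ({x | IsUnit x} ×ˢ {x | primePowRed p (Nat.sub_le e f) x = 0}) ×ˢ
        (Set.univ ×ˢ {x | primePowRed p ((Nat.sub_le d f).trans hde) x = 1}) := by
    ext q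
    simp [and_assoc]
  rw [this, Set.ncard_prod, Set.ncard_prod, Set.ncard_prod, ZMod.ncard_primePowRed_fiber,
    ZMod.ncard_primePowRed_fiber, ZMod.ncard_isUnit, Set.ncard_univ, Nat.card_zmod,
    Nat.sub_sub_self (hfd.trans hde), Nat.totient_prime_pow Fact.out hd]

end ZModSemidirect

theorem IsExactBicyclicPair.map {G H : Type*} [Group G] [Group H] {m n : ℕ} {α β : G}
    (h : IsExactBicyclicPair m n α β) (θ : G ≃* H) : IsExactBicyclicPair m n (θ α) (θ β) := by
  obtain ⟨h1, h2, h3, h4⟩ := h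
  refine ⟨by rw [θ.orderOf_eq, h1], by rw [θ.orderOf_eq, h2], ?_, fun g => ?_⟩
  · have hz (x : G) : Subgroup.zpowers (θ x) = (Subgroup.zpowers x).map θ.toMonoidHom :=
      (MonoidHom.map_zpowers θ.toMonoidHom x).symm
    rw [hz, hz, ← Subgroup.map_inf _ _ _ θ.injective, h3, Subgroup.map_bot]
  · obtain ⟨i, j, hij⟩ := h4 (θ.symm g)
    exact ⟨i, j, by rw [← map_zpow, ← map_zpow, ← map_mul, ← hij, θ.apply_symm_apply]⟩

theorem isExactBicyclicPair_map_iff {G H : Type*} [Group G] [Group H] {m n : ℕ} {α β : G}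
    (θ : G ≃* H) : IsExactBicyclicPair m n (θ α) (θ β) ↔ IsExactBicyclicPair m n α β :=
  ⟨fun h => by simpa using h.map θ.symm, fun h => h.map θ⟩

theorem IsExactBicyclicPair.hom_ext {G H : Type*} [Group G] [Group H] {m n : ℕ} {α β : G}
    (h : IsExactBicyclicPair m n α β) {φ φ' : G →* H} (hα : φ α = φ' α) (hβ : φ β = φ' β) :
    φ = φ' := by
  ext g
  obtain ⟨i, j, rfl⟩ := h.2.2.2 g
  simp [hα, hβ]

/-- Automorphisms act freely on exact bicyclic pairs. -/
theorem card_isExactBicyclicPair (G : Type*) [Group G] (m n : ℕ) :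
    Nat.card {x : G × G // IsExactBicyclicPair m n x.1 x.2} =
      Nat.card (MulAut G) * Nat.card (Quotient (bicyclicPairSetoid G m n)) := by
  rw [← Nat.card_prod]
  let act (φ : MulAut G) (x : {x : G × G // IsExactBicyclicPair m n x.1 x.2}) :
      {x : G × G // IsExactBicyclicPair m n x.1 x.2} := ⟨(φ x.1.1, φ x.1.2), x.2.map φ⟩
  let F (y : MulAut G × Quotient (bicyclicPairSetoid G m n)) := act y.1 y.2.out
  have hmk (φ : MulAut G) (q : Quotient (bicyclicPairSetoid G m n)) :
      (Quotient.mk _ (act φ q.out) : Quotient (bicyclicPairSetoid G m n)) = q := by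
    conv_rhs => rw [← q.out_eq]
    exact Quotient.sound ((bicyclicPairSetoid G m n).symm ⟨φ, rfl, rfl⟩)
  refine (Nat.card_congr (Equiv.ofBijective F ⟨?_, fun x => ?_⟩)).symm
  · rintro ⟨φ, q⟩ ⟨φ', q'⟩ h
    have hq : q = q' := by rw [← hmk φ q, ← hmk φ' q']; exact congrArg _ h
    subst hq
    have h1 := congrArg Subtype.val h
    have hφ : φ.toMonoidHom = φ'.toMonoidHom :=
      q.out.2.hom_ext (congrArg Prod.fst h1) (congrArg Prod.snd h1)
    rw [Prod.mk.injEq]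
    exact ⟨MulEquiv.ext fun g => DFunLike.congr_fun hφ g, rfl⟩
  · obtain ⟨φ, h1, h2⟩ := Quotient.mk_out (s := bicyclicPairSetoid G m n) x
    exact ⟨(φ, Quotient.mk _ x), Subtype.ext (Prod.ext h1 h2)⟩

namespace M2

variable {p d e f : ℕ}

theorem a_pow : M2a p d e f ^ p ^ d = 1 :=
  PresentedGroup.one_of_mem (rels := M2rels p d e f) (Or.inl rfl)

theorem b_pow : M2b p d e f ^ p ^ e = 1 :=
  PresentedGroup.one_of_mem (rels := M2rels p d e f) (Or.inr (Or.inl rfl))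

theorem conj_eq : (M2b p d e f)⁻¹ * M2a p d e f * M2b p d e f = M2a p d e f ^ (1 + p ^ f) :=
  mul_inv_eq_one.1 (PresentedGroup.one_of_mem (rels := M2rels p d e f) (Or.inr (Or.inr rfl)))

theorem exists_hom {G : Type*} [Group G] {x y : G} (hx : x ^ p ^ d = 1) (hy : y ^ p ^ e = 1)
    (hxy : y⁻¹ * x * y = x ^ (1 + p ^ f)) :
    ∃ φ : M2 p d e f →* G, φ (M2a p d e f) = x ∧ φ (M2b p d e f) = y := by
  have h : ∀ r ∈ M2rels p d e f, FreeGroup.lift ![x, y] r = 1 := by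
    rintro r (rfl | rfl | rfl)
    · simpa using hx
    · simpa using hy
    · simpa [mul_inv_eq_one] using hxy
  exact ⟨PresentedGroup.toGroup h, PresentedGroup.toGroup.of h, PresentedGroup.toGroup.of h⟩

theorem a_mul_b_pow (j : ℕ) :
    M2a p d e f * M2b p d e f ^ j = M2b p d e f ^ j * M2a p d e f ^ (1 + p ^ f) ^ j := by
  have hab (k : ℕ) : M2a p d e f ^ k * M2b p d e f =
      M2b p d e f * M2a p d e f ^ (k * (1 + p ^ f)) := by
    rw [mul_comm k, pow_mul, ← conj_eq, ← inv_mul_eq_iff_eq_mul, ← mul_assoc]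
    have := conj_pow (i := k) (a := (M2b p d e f)⁻¹) (b := M2a p d e f)
    rw [inv_inv] at this
    exact this.symm
  induction j with
  | zero => simp
  | succ j ih => rw [pow_succ, ← mul_assoc, ih, mul_assoc, hab, ← mul_assoc, ← pow_succ,
      pow_succ (1 + p ^ f)]

theorem exists_eq_b_pow_mul_a_pow (hp : 0 < p) (g : M2 p d e f) :
    ∃ i j : ℕ, g = M2b p d e f ^ j * M2a p d e f ^ i := by
  let P (g : M2 p d e f) : Prop := ∃ i j : ℕ, g = M2b p d e f ^ j * M2a p d e f ^ i
  have ha (g) (h : P g) : P (M2a p d e f * g) := by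
    obtain ⟨i, j, rfl⟩ := h
    exact ⟨(1 + p ^ f) ^ j + i, j, by rw [← mul_assoc, a_mul_b_pow, mul_assoc, ← pow_add]⟩
  have hb (g) (h : P g) : P (M2b p d e f * g) := by
    obtain ⟨i, j, rfl⟩ := h
    exact ⟨i, j + 1, by rw [pow_succ', mul_assoc]⟩
  have hpow (x : M2 p d e f) (hx : ∀ g, P g → P (x * g)) (k : ℕ) (g) (h : P g) :
      P (x ^ k * g) := by
    induction k with
    | zero => simpa using h
    | succ k ih => rw [pow_succ', mul_assoc]; exact hx _ ih
  have hinv (x : M2 p d e f) {n : ℕ} (hn : 0 < n) (hx : x ^ n = 1) : x⁻¹ = x ^ (n - 1) :=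
    inv_eq_of_mul_eq_one_right (by rw [← pow_succ', Nat.sub_add_cancel hn, hx])
  have hg : g ∈ Subgroup.closure (Set.range (PresentedGroup.of (rels := M2rels p d e f))) := by
    rw [PresentedGroup.closure_range_of]
    exact Subgroup.mem_top g
  induction hg using Subgroup.closure_induction_left with
  | one => exact ⟨0, 0, by simp⟩
  | mul_left x hx y _ ih =>
    obtain ⟨i, rfl⟩ := hx
    fin_cases i
    · exact ha _ ih
    · exact hb _ ih
  | inv_mul_cancel x hx y _ ih =>
    obtain ⟨i, rfl⟩ := hx
    fin_cases i
    · change P ((M2a p d e f)⁻¹ * y)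
      rw [hinv _ (pow_pos hp d) a_pow]
      exact hpow _ ha _ _ ih
    · change P ((M2b p d e f)⁻¹ * y)
      rw [hinv _ (pow_pos hp e) b_pow]
      exact hpow _ hb _ _ ih

open Multiplicative (ofAdd)

theorem exists_mulEquiv [Fact p.Prime] (hodd : Odd p) (hf : 0 < f) (hfd : f < d) (hde : d < e)
    {ψ : Multiplicative (ZMod (p ^ e)) →* ZMod (p ^ d)}
    (hψ : ψ (ofAdd 1) = 1 + (p : ZMod (p ^ d)) ^ f) :
    ∃ θ : M2 p d e f ≃* ZModSemidirect ψ,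
      θ (M2a p d e f) = ⟨1, 0⟩ ∧ θ (M2b p d e f) = ⟨0, 1⟩ := by
  have hp : p.Prime := Fact.out
  have hd : 1 ≤ d := hf.trans hfd
  have hψ' := ZModSemidirect.action_mod_prime hψ hd hf
  obtain ⟨φ, ha, hb⟩ := exists_hom (d := d) (e := e) (f := f) (p := p)
    (x := (⟨1, 0⟩ : ZModSemidirect ψ)) (y := ⟨0, 1⟩)
    (orderOf_dvd_iff_pow_eq_one.1 (ZModSemidirect.orderOf_of_isUnit_fst hodd hd hde hψ'
      isUnit_one (map_zero _)).dvd)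
    (orderOf_dvd_iff_pow_eq_one.1 (ZModSemidirect.orderOf_of_isUnit_snd hodd hd hde hψ'
      isUnit_one).dvd)
    ((ZModSemidirect.conj_eq_pow_iff hψ hodd hf hfd.le hde.le isUnit_one _).2
      ⟨map_zero _, map_one _⟩)
  have hφ (i j : ℕ) : φ (M2b p d e f ^ j * M2a p d e f ^ i) = ⟨i, j⟩ := by
    rw [map_mul, map_pow, map_pow, ha, hb]
    ext
    · simp [ZModSemidirect.pow_fst, ZModSemidirect.pow_snd]
    · simp [ZModSemidirect.pow_snd]
  refine ⟨MulEquiv.ofBijective φ ⟨(injective_iff_map_eq_one φ).2 fun g hg => ?_, fun x => ?_⟩,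
    ha, hb⟩
  · obtain ⟨i, j, rfl⟩ := exists_eq_b_pow_mul_a_pow hp.pos g
    rw [hφ, ZModSemidirect.ext_iff] at hg
    obtain ⟨i', hi⟩ := (ZMod.natCast_eq_zero_iff _ _).1 hg.1
    obtain ⟨j', hj⟩ := (ZMod.natCast_eq_zero_iff _ _).1 hg.2
    rw [hi, hj, pow_mul, pow_mul, a_pow, b_pow, one_pow, one_pow, mul_one]
  · obtain ⟨i, hi⟩ := ZMod.natCast_zmod_surjective x.fst
    obtain ⟨j, hj⟩ := ZMod.natCast_zmod_surjective x.snd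
    exact ⟨_, (hφ i j).trans (ZModSemidirect.ext hi hj)⟩

/-- An automorphism is determined by the images of the generators, and these are the exact
bicyclic pairs that satisfy the conjugation relation. -/
theorem card_mulAut [Finite (M2 p d e f)]
    (hab : IsExactBicyclicPair (p ^ d) (p ^ e) (M2a p d e f) (M2b p d e f)) :
    Nat.card (MulAut (M2 p d e f)) =
      Nat.card {x : M2 p d e f × M2 p d e f // IsExactBicyclicPair (p ^ d) (p ^ e) x.1 x.2 ∧
        x.2⁻¹ * x.1 * x.2 = x.1 ^ (1 + p ^ f)} := by
  refine Nat.card_congr (Equiv.ofBijective (fun φ => ⟨(φ (M2a p d e f), φ (M2b p d e f)),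
    hab.map φ, by rw [← map_inv, ← map_mul, ← map_mul, conj_eq, map_pow]⟩) ⟨?_, ?_⟩)
  · intro φ φ' h
    have h1 := congrArg Subtype.val h
    have hφ : φ.toMonoidHom = φ'.toMonoidHom :=
      hab.hom_ext (congrArg Prod.fst h1) (congrArg Prod.snd h1)
    exact MulEquiv.ext fun g => DFunLike.congr_fun hφ g
  · rintro ⟨⟨x, y⟩, hxy, hrel⟩
    obtain ⟨φ, ha, hb⟩ := exists_hom (orderOf_dvd_iff_pow_eq_one.1 hxy.1.dvd)
      (orderOf_dvd_iff_pow_eq_one.1 hxy.2.1.dvd) hrel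
    have hsurj : Function.Surjective φ := fun g => by
      obtain ⟨i, j, rfl⟩ := hxy.2.2.2 g
      exact ⟨M2a p d e f ^ i * M2b p d e f ^ j, by rw [map_mul, map_zpow, map_zpow, ha, hb]⟩
    exact ⟨MulEquiv.ofBijective φ (Finite.surjective_iff_bijective.1 hsurj),
      Subtype.ext (Prod.ext ha hb)⟩

end M2

/-- For `G = M₂(p,d,e,f)` with `1 ≤ f < d < e`, the number of orbits of
`Aut(G)` acting componentwise on the exact `(p^d,p^e)`-bicyclic pairs of `G` equals
`p^(2d-2f-1)(p-1)`. -/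
theorem stmt_18 (p d e f : ℕ) (hp : p.Prime) (hodd : Odd p)
    (hf : 0 < f) (hfd : f < d) (hde : d < e) :
    Nat.card (Quotient (bicyclicPairSetoid (M2 p d e f) (p ^ d) (p ^ e))) =
      p ^ (2 * d - 2 * f - 1) * (p - 1) := by
  have := Fact.mk hp
  have hd : 0 < d := hf.trans hfd
  obtain ⟨ψ, hψ⟩ := ZModSemidirect.exists_action hodd hf hfd.le hde.le
  have hψ' := ZModSemidirect.action_mod_prime hψ hd hf
  obtain ⟨θ, ha, hb⟩ := M2.exists_mulEquiv hodd hf hfd hde hψ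
  have hfin : Finite (M2 p d e f) := Finite.of_equiv _ θ.symm.toEquiv
  let E := (θ.toEquiv.trans ZModSemidirect.equivProd).prodCongr
    (θ.toEquiv.trans ZModSemidirect.equivProd)
  have hexact (x : M2 p d e f × M2 p d e f) := (isExactBicyclicPair_map_iff θ).symm.trans
    (ZModSemidirect.isExactBicyclicPair_iff hodd hd hde hψ' (θ x.1) (θ x.2))
  have hrel (x : M2 p d e f × M2 p d e f) (hx : IsUnit (θ x.1).fst) :
      x.2⁻¹ * x.1 * x.2 = x.1 ^ (1 + p ^ f) ↔
        primePowRed p (Nat.sub_le e f) (θ x.1).snd = 0 ∧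
          primePowRed p ((Nat.sub_le d f).trans hde.le) (θ x.2).snd = 1 := by
    rw [← ZModSemidirect.conj_eq_pow_iff hψ hodd hf hfd.le hde.le hx, ← map_inv, ← map_mul,
      ← map_mul, ← map_pow, θ.injective.eq_iff]
  have hab : IsExactBicyclicPair (p ^ d) (p ^ e) (M2a p d e f) (M2b p d e f) := by
    refine (hexact (M2a p d e f, M2b p d e f)).2 ?_
    rw [ha, hb]
    exact ⟨map_zero _, isUnit_one, isUnit_one⟩
  have hpairs := card_isExactBicyclicPair (M2 p d e f) (p ^ d) (p ^ e)
  have hX := (Nat.card_congr (E.subtypeEquiv hexact)).trans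
    (ZModSemidirect.ncard_exact_coordinates hde.le hd)
  have hauto (x : M2 p d e f × M2 p d e f) :
      IsExactBicyclicPair (p ^ d) (p ^ e) x.1 x.2 ∧ x.2⁻¹ * x.1 * x.2 = x.1 ^ (1 + p ^ f) ↔
        IsUnit (θ x.1).fst ∧ primePowRed p (Nat.sub_le e f) (θ x.1).snd = 0 ∧
          primePowRed p ((Nat.sub_le d f).trans hde.le) (θ x.2).snd = 1 := by
    refine ⟨fun h => ?_, fun h => ?_⟩
    · have hx := ((hexact x).1 h.1).2.1
      exact ⟨hx, (hrel x hx).1 h.2⟩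
    · obtain ⟨hx, h0, h1⟩ := h
      refine ⟨(hexact x).2 ⟨?_, hx, ?_⟩, (hrel x hx).2 ⟨h0, h1⟩⟩
      · rw [← ZMod.primePowRed_primePowRed (Nat.sub_le_sub_left hfd.le e) (Nat.sub_le e f)]
        exact (congrArg _ h0).trans (map_zero _)
      · rw [← ZMod.isUnit_primePowRed_iff (Nat.sub_pos_of_lt hfd) ((Nat.sub_le d f).trans hde.le)]
        exact h1 ▸ isUnit_one
  have hA := (Nat.card_congr (E.subtypeEquiv hauto)).trans
    (ZModSemidirect.ncard_automorphism_coordinates hfd.le hde.le hd)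
  rw [M2.card_mulAut hab, hX, hA] at hpairs
  have hpos := hp.pos
  have hp1 : 0 < p - 1 := Nat.sub_pos_of_lt hp.one_lt
  refine Nat.eq_of_mul_eq_mul_left ?_ (hpairs.symm.trans ?_)
  · positivity
  · have h1 : d - 1 + d + d + (e - 1) =
        d - 1 + f + d + (e - (d - f)) + (2 * d - 2 * f - 1) := by lia
    have h2 := congrArg (p ^ ·) h1
    simp only [pow_add] at h2
    linear_combination (p - 1) * (p - 1) * h2
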